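/- For every x ∈ 𝕋² = ℝ²/ℤ², the set Γ_x is dense in the set of homeomorphisms of 𝕋² with respect to the uniform (C⁰) metric: for every homeomorphism g of 𝕋² and every ε > 0 there exists h ∈ Γ_x with sup_{z ∈ 𝕋²} d(h(z), g(z)) < ε. -/

import Mathlib

/-! A homeomorphism of `𝕋²` lifts to a homeomorphism `G` of `ℝ²` at bounded distance from a linear
map, and this makes a form of Kirby's torus trick available, which avoids the Schoenflies theorem.

After translations, assume `x = 0` and `g 0 = 0`, and take `G 0 = 0` (`exists_lift`). On `ℤ²` the
lift is the restriction of an invertible linear map `A` (`exists_linear`), so `Q = G⁻¹ ∘ A`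
satisfies `Q (v + n) = Q v + n` for `n ∈ ℤ²` and is therefore at bounded distance from the identity
(`exists_bounded`). A radial homeomorphism `ρ` from the plane onto the ball of radius `2r` that is
the identity on the ball of radius `r` contracts bounded distances to zero near infinity. Hence
`ρ Q ρ⁻¹`, extended by the identity outside the ball, is a homeomorphism `f` of the plane, and
`f = Q` near `0` because `Q 0 = 0` (`exists_squeeze`). For small `r`, `f` descends to a
homeomorphism `F` of `𝕋²` that moves points by less than `4r` (`exists_descend`). Then
`h = g ∘ F` is uniformly close to `g`, and near `0` it lifts to `G ∘ Q = A`.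
-/

open Metric MeasureTheory Set

/-- The 2-torus `𝕋² = ℝ²/ℤ²`. -/
abbrev Torus2 : Type := AddCircle (1 : ℝ) × AddCircle (1 : ℝ)

/-- The natural projection `ℝ² → 𝕋²`. -/
noncomputable def torusProj (v : ℝ × ℝ) : Torus2 :=
  (((v.1 : ℝ) : AddCircle (1 : ℝ)), ((v.2 : ℝ) : AddCircle (1 : ℝ)))

/-- `g ∈ Γ_x`: there are an invertible `2×2` real matrix (an invertible linear map
`A : ℝ² → ℝ²`) and a neighborhood of `x` on which, in local coordinates,
`g(z) = A(z - x) + g(x)`. -/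
def MemGamma (x : Torus2) (g : Torus2 ≃ₜ Torus2) : Prop :=
  ∃ A : (ℝ × ℝ) ≃ₗ[ℝ] (ℝ × ℝ), ∃ δ : ℝ, 0 < δ ∧
    ∀ v : ℝ × ℝ, ‖v‖ < δ → g (x + torusProj v) = g x + torusProj (A v)

/-! ### Squeezing a homeomorphism at bounded distance from the identity into a ball -/

section Squeeze

variable {E : Type*} [NormedAddCommGroup E] [NormedSpace ℝ E]

/-- The radial homeomorphism `ρ` from `E` onto the open ball of radius `2r`, equal to the identity
on the ball of radius `r`; a vector of norm `t ≥ r` is sent to norm `2rt / (r + t)`. -/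
noncomputable def squeeze (r : ℝ) (v : E) : E := (2 * r / (r + max r ‖v‖)) • v

/-- The inverse of `squeeze r` on the open ball of radius `2r` (not meaningful elsewhere). -/
noncomputable def unsqueeze (r : ℝ) (w : E) : E := (r / (2 * r - max r ‖w‖)) • w

lemma norm_squeeze {r : ℝ} (hr : 0 < r) (v : E) :
    ‖squeeze r v‖ = 2 * r / (r + max r ‖v‖) * ‖v‖ := by
  have : 0 < r + max r ‖v‖ := by positivity
  rw [squeeze, norm_smul, Real.norm_of_nonneg (by positivity)]

lemma norm_squeeze_lt {r : ℝ} (hr : 0 < r) (v : E) : ‖squeeze r v‖ < 2 * r := by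
  rw [norm_squeeze hr]
  have h0 : 0 < r + max r ‖v‖ := by positivity
  rw [div_mul_eq_mul_div, div_lt_iff₀ h0]
  have := le_max_right r ‖v‖
  nlinarith

lemma squeeze_of_le {r : ℝ} (hr : 0 < r) {v : E} (hv : ‖v‖ ≤ r) : squeeze r v = v := by
  rw [squeeze, max_eq_left hv, ← two_mul, div_self (by positivity), one_smul]

lemma unsqueeze_of_le {r : ℝ} (hr : 0 < r) {v : E} (hv : ‖v‖ ≤ r) : unsqueeze r v = v := by
  rw [unsqueeze, max_eq_left hv, two_mul, add_sub_cancel_right, div_self hr.ne', one_smul]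

lemma unsqueeze_squeeze {r : ℝ} (hr : 0 < r) (v : E) : unsqueeze r (squeeze r v) = v := by
  rcases le_total ‖v‖ r with h | h
  · rw [squeeze_of_le hr h, unsqueeze_of_le hr h]
  · have hn := norm_squeeze hr v
    have hlt := norm_squeeze_lt hr v
    rw [max_eq_right h] at hn
    have h0 : 0 < r + ‖v‖ := by positivity
    have hge : r ≤ ‖squeeze r v‖ := by
      rw [hn, div_mul_eq_mul_div, le_div_iff₀ h0]; nlinarith
    rw [unsqueeze, max_eq_right hge, hn]
    rw [squeeze, smul_smul, max_eq_right h]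
    have : r / (2 * r - 2 * r / (r + ‖v‖) * ‖v‖) * (2 * r / (r + ‖v‖)) = 1 := by
      have : 2 * r - 2 * r / (r + ‖v‖) * ‖v‖ = 2 * r * r / (r + ‖v‖) := by field_simp; ring
      rw [this]; field_simp
    rw [this, one_smul]

lemma norm_unsqueeze {r : ℝ} (hr : 0 < r) {w : E} (hw : ‖w‖ < 2 * r) :
    ‖unsqueeze r w‖ = r / (2 * r - max r ‖w‖) * ‖w‖ := by
  have : 0 < 2 * r - max r ‖w‖ := by
    have : max r ‖w‖ < 2 * r := max_lt (by linarith) hw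
    linarith
  rw [unsqueeze, norm_smul, Real.norm_of_nonneg (by positivity)]

/-- The scaling factor of `squeeze` at `unsqueeze r w` is the inverse of that of `unsqueeze`
at `w`. -/
lemma squeeze_factor {r : ℝ} (hr : 0 < r) {w : E} (hw : ‖w‖ < 2 * r) :
    2 * r / (r + max r ‖unsqueeze r w‖) = (2 * r - max r ‖w‖) / r := by
  rcases le_total ‖w‖ r with h | h
  · rw [unsqueeze_of_le hr h, max_eq_left h]; field_simp; ring
  · have hn := norm_unsqueeze hr hw
    rw [max_eq_right h] at hn ⊢
    have h0 : 0 < 2 * r - ‖w‖ := by linarith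
    have : r ≤ ‖unsqueeze r w‖ := by
      rw [hn, div_mul_eq_mul_div, le_div_iff₀ h0]; nlinarith
    rw [max_eq_right this, hn]
    have : r + r / (2 * r - ‖w‖) * ‖w‖ = 2 * r * r / (2 * r - ‖w‖) := by
      rw [eq_div_iff h0.ne', add_mul, div_mul_eq_mul_div, div_mul_cancel₀ _ h0.ne']; ring
    rw [this]; field_simp

lemma squeeze_unsqueeze {r : ℝ} (hr : 0 < r) {w : E} (hw : ‖w‖ < 2 * r) :
    squeeze r (unsqueeze r w) = w := by
  have : 0 < 2 * r - max r ‖w‖ := by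
    have : max r ‖w‖ < 2 * r := max_lt (by linarith) hw
    linarith
  rw [squeeze, squeeze_factor hr hw, unsqueeze, smul_smul]
  rw [div_mul_div_cancel₀ hr.ne', div_self this.ne', one_smul]

lemma continuous_squeeze {r : ℝ} (hr : 0 < r) : Continuous (squeeze r : E → E) := by
  unfold squeeze
  refine Continuous.smul (Continuous.div (by fun_prop) (by fun_prop) fun v => ?_) continuous_id
  positivity

lemma continuousAt_unsqueeze {r : ℝ} (hr : 0 < r) {w : E} (hw : ‖w‖ < 2 * r) :
    ContinuousAt (unsqueeze r : E → E) w := by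
  have : 0 < 2 * r - max r ‖w‖ := by
    have : max r ‖w‖ < 2 * r := max_lt (by linarith) hw
    linarith
  unfold unsqueeze
  exact ContinuousAt.smul (ContinuousAt.div (by fun_prop) (by fun_prop) this.ne') continuousAt_id

/-- Points at distance at most `C` are moved by `squeeze` to points whose distance is controlled by
the scaling factor at one of them, which tends to zero at infinity. -/
lemma norm_squeeze_sub_le {r C : ℝ} (hr : 0 < r) {a v : E} (h : ‖a - v‖ ≤ C) :
    ‖squeeze r a - squeeze r v‖ ≤ 2 * C * (2 * r / (r + max r ‖v‖)) := by
  have ha : 0 < r + max r ‖a‖ := by positivity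
  have hv : 0 < r + max r ‖v‖ := by positivity
  have e : squeeze r a - squeeze r v = (2 * r / (r + max r ‖v‖)) • (a - v) +
      (2 * r / (r + max r ‖a‖) - 2 * r / (r + max r ‖v‖)) • a := by
    unfold squeeze; module
  have hd : |max r ‖v‖ - max r ‖a‖| ≤ C :=
    ((abs_max_sub_max_le_max r ‖v‖ r ‖a‖).trans (by
      simpa using (abs_norm_sub_norm_le v a).trans (norm_sub_rev v a).le)).trans h
  have e2 : 2 * r / (r + max r ‖a‖) - 2 * r / (r + max r ‖v‖) =
      2 * r / (r + max r ‖v‖) * ((max r ‖v‖ - max r ‖a‖) / (r + max r ‖a‖)) := by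
    field_simp; ring
  have hm : 0 < 2 * r / (r + max r ‖v‖) := by positivity
  have h3 : ‖(2 * r / (r + max r ‖a‖) - 2 * r / (r + max r ‖v‖)) • a‖ ≤
      2 * r / (r + max r ‖v‖) * C := by
    rw [e2, norm_smul, norm_mul, Real.norm_of_nonneg hm.le, mul_assoc]
    refine mul_le_mul_of_nonneg_left ?_ hm.le
    rw [norm_div, Real.norm_eq_abs, Real.norm_of_nonneg ha.le, div_mul_eq_mul_div, div_le_iff₀ ha]
    have h5 := le_max_right r ‖a‖
    exact mul_le_mul hd (by linarith) (norm_nonneg _) ((abs_nonneg _).trans hd)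
  rw [e]
  refine (norm_add_le _ _).trans ?_
  rw [norm_smul, Real.norm_of_nonneg hm.le]
  nlinarith [mul_le_mul_of_nonneg_left h hm.le]

open Classical in
/-- The conjugate `ρ Q ρ⁻¹` of `Q` by `ρ = squeeze r`, extended by the identity outside the ball of
radius `2r`. -/
noncomputable def squeezed (r : ℝ) (Q : E → E) (w : E) : E :=
  if ‖w‖ < 2 * r then squeeze r (Q (unsqueeze r w)) else w

lemma squeezed_squeezed {r : ℝ} (hr : 0 < r) {Q Q' : E → E} (h : ∀ v, Q' (Q v) = v) (w : E) :
    squeezed r Q' (squeezed r Q w) = w := by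
  by_cases hw : ‖w‖ < 2 * r
  · have : squeezed r Q w = squeeze r (Q (unsqueeze r w)) := if_pos hw
    rw [this, squeezed, if_pos (norm_squeeze_lt hr _), unsqueeze_squeeze hr, h,
      squeeze_unsqueeze hr hw]
  · have h1 : squeezed r Q w = w := if_neg hw
    rw [h1, squeezed, if_neg hw]

lemma continuous_squeezed {r C : ℝ} (hr : 0 < r) {Q : E → E} (hQ : Continuous Q)
    (h : ∀ v, ‖Q v - v‖ ≤ C) : Continuous (squeezed r Q) := by
  have hC : 0 ≤ C := (norm_nonneg _).trans (h 0)
  refine continuous_iff_continuousAt.2 fun w => ?_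
  by_cases hw : ‖w‖ < 2 * r
  · have hev : squeezed r Q =ᶠ[nhds w] fun w => squeeze r (Q (unsqueeze r w)) := by
      filter_upwards [continuous_norm.continuousAt.eventually_lt_const hw] with u hu
      exact if_pos hu
    refine ContinuousAt.congr ?_ hev.symm
    exact (continuous_squeeze hr).continuousAt.comp
      (hQ.continuousAt.comp (continuousAt_unsqueeze hr hw))
  ·
    -- At `‖w‖ ≥ 2r` the displacement has a continuous majorant that vanishes.
    have hb : ∀ u : E, ‖squeezed r Q u - u‖ ≤ 2 * C * (max 0 (2 * r - max r ‖u‖) / r) := by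
      intro u
      by_cases hu : ‖u‖ < 2 * r
      · have h1 : squeezed r Q u = squeeze r (Q (unsqueeze r u)) := if_pos hu
        have h2 := norm_squeeze_sub_le hr (h (unsqueeze r u))
        rw [squeeze_unsqueeze hr hu, squeeze_factor hr hu] at h2
        rw [h1]
        refine h2.trans ?_
        gcongr
        exact le_max_right _ _
      · have h1 : squeezed r Q u = u := if_neg hu
        rw [h1, sub_self, norm_zero]
        positivity
    have hlim : Filter.Tendsto (fun u : E => 2 * C * (max 0 (2 * r - max r ‖u‖) / r))
        (nhds w) (nhds 0) := by
      have hc : Continuous (fun u : E => 2 * C * (max 0 (2 * r - max r ‖u‖) / r)) := by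
        fun_prop
      have h0 : 2 * C * (max 0 (2 * r - max r ‖w‖) / r) = 0 := by
        have := le_max_right r ‖w‖
        rw [max_eq_left (by linarith [not_lt.1 hw])]
        simp
      have := hc.tendsto w
      rwa [h0] at this
    have hd := squeeze_zero_norm hb hlim
    have hs := hd.add (Filter.tendsto_id (α := E) (x := nhds w))
    have h1 : squeezed r Q w = w := if_neg hw
    rw [ContinuousAt, h1]
    simpa using hs

/-- A homeomorphism `Q` at bounded distance from the identity can be replaced by one supported in
the ball of radius `2r`, without change at the points `v` for which both `v` and `Q v` lie in the
ball of radius `r`. -/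
lemma exists_squeeze (Q : E ≃ₜ E) {C : ℝ} (hQ : ∀ v, ‖Q v - v‖ ≤ C) {r : ℝ} (hr : 0 < r) :
    ∃ f : E ≃ₜ E, (∀ v, 2 * r ≤ ‖v‖ → f v = v) ∧ ∀ v, ‖v‖ ≤ r → ‖Q v‖ ≤ r → f v = Q v := by
  have hQ' : ∀ v, ‖Q.symm v - v‖ ≤ C := fun v => by
    have := hQ (Q.symm v)
    rwa [Q.apply_symm_apply, norm_sub_rev] at this
  refine ⟨{ toFun := squeezed r Q
            invFun := squeezed r Q.symm
            left_inv := squeezed_squeezed hr Q.symm_apply_apply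
            right_inv := squeezed_squeezed hr Q.apply_symm_apply
            continuous_toFun := continuous_squeezed hr Q.continuous hQ
            continuous_invFun := continuous_squeezed hr Q.symm.continuous hQ' }, ?_, ?_⟩
  · intro v hv
    exact if_neg (not_lt.2 hv)
  · intro v hv hv'
    have : squeezed r Q v = squeeze r (Q (unsqueeze r v)) := if_pos (by linarith)
    change squeezed r Q v = Q v
    rw [this, unsqueeze_of_le hr hv, squeeze_of_le hr hv']

end Squeeze

/-! ### Descending compactly supported homeomorphisms to the torus -/

lemma torusProj_add (v w : ℝ × ℝ) : torusProj (v + w) = torusProj v + torusProj w := rfl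

lemma torusProj_sub (v w : ℝ × ℝ) : torusProj (v - w) = torusProj v - torusProj w := rfl

lemma torusProj_zero : torusProj 0 = 0 := rfl

lemma continuous_torusProj : Continuous torusProj :=
  Continuous.prodMk ((AddCircle.continuous_mk' 1).comp continuous_fst)
    ((AddCircle.continuous_mk' 1).comp continuous_snd)

lemma norm_torusProj_le (v : ℝ × ℝ) : ‖torusProj v‖ ≤ ‖v‖ := by
  have h : ∀ t : ℝ, ‖(t : AddCircle (1 : ℝ))‖ ≤ ‖t‖ := fun t => by
    have := round_le t 0
    simpa [AddCircle.norm_eq] using this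
  exact max_le_max (h v.1) (h v.2)

/-- The representative of a point of the torus in the square `[-1/2, 1/2)²`. -/
noncomputable def torusRep (z : Torus2) : ℝ × ℝ :=
  ((AddCircle.equivIco 1 (-(1 / 2)) z.1 : ℝ), (AddCircle.equivIco 1 (-(1 / 2)) z.2 : ℝ))

lemma torusProj_torusRep (z : Torus2) : torusProj (torusRep z) = z :=
  Prod.ext AddCircle.coe_equivIco AddCircle.coe_equivIco

lemma torusRep_torusProj {v : ℝ × ℝ} (hv : ‖v‖ < 1 / 2) : torusRep (torusProj v) = v := by
  have h1 := abs_lt.1 ((norm_fst_le v).trans_lt hv)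
  have h2 := abs_lt.1 ((norm_snd_le v).trans_lt hv)
  refine Prod.ext (AddCircle.equivIco_coe_of_mem ⟨h1.1.le, ?_⟩)
    (AddCircle.equivIco_coe_of_mem ⟨h2.1.le, ?_⟩) <;> linarith

lemma norm_torusRep (z : Torus2) : ‖torusRep z‖ = ‖z‖ := by
  have h : ∀ y : AddCircle (1 : ℝ), ‖(AddCircle.equivIco 1 (-(1 / 2)) y : ℝ)‖ = ‖y‖ := fun y => by
    have hm := (AddCircle.equivIco 1 (-(1 / 2)) y).2
    have := (AddCircle.norm_coe_eq_abs_iff (p := 1)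
      (x := (AddCircle.equivIco 1 (-(1 / 2)) y : ℝ)) one_ne_zero).2
      (abs_le.2 ⟨by simpa using hm.1, by have := hm.2; rw [abs_one]; linarith⟩)
    rw [AddCircle.coe_equivIco] at this
    exact this.symm
  rw [Prod.norm_def, Prod.norm_def]
  exact congrArg₂ max (h z.1) (h z.2)

lemma continuousAt_torusRep {z : Torus2} (hz : ‖z‖ < 1 / 2) : ContinuousAt torusRep z := by
  have key : ∀ y : AddCircle (1 : ℝ), ‖y‖ < 1 / 2 → y ≠ ((-(1 / 2) : ℝ) : AddCircle (1 : ℝ)) := by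
    rintro y hy rfl
    rw [(AddCircle.norm_coe_eq_abs_iff (p := 1) one_ne_zero).2
      (by rw [abs_neg, abs_one, abs_of_pos (by norm_num)])] at hy
    rw [abs_neg, abs_of_pos (by norm_num)] at hy
    exact lt_irrefl _ hy
  have h1 := AddCircle.continuousAt_equivIco 1 (-(1 / 2)) (key _ ((norm_fst_le z).trans_lt hz))
  have h2 := AddCircle.continuousAt_equivIco 1 (-(1 / 2)) (key _ ((norm_snd_le z).trans_lt hz))
  exact ContinuousAt.prodMk
    ((continuous_subtype_val.continuousAt.comp h1).comp continuous_fst.continuousAt)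
    ((continuous_subtype_val.continuousAt.comp h2).comp continuous_snd.continuousAt)

/-- The self-map of the torus induced by a self-map of the plane supported in a ball inside the
fundamental square. -/
noncomputable def descend (f : ℝ × ℝ → ℝ × ℝ) (z : Torus2) : Torus2 := torusProj (f (torusRep z))

lemma descend_of_le {f : ℝ × ℝ → ℝ × ℝ} {r : ℝ} (hf : ∀ v, 2 * r ≤ ‖v‖ → f v = v) {z : Torus2}
    (hz : 2 * r ≤ ‖z‖) : descend f z = z := by
  rw [descend, hf _ (by rwa [norm_torusRep]), torusProj_torusRep]

lemma continuous_descend {f : ℝ × ℝ → ℝ × ℝ} (hc : Continuous f) {r : ℝ} (hr : 2 * r < 1 / 2)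
    (hf : ∀ v, 2 * r ≤ ‖v‖ → f v = v) : Continuous (descend f) := by
  refine continuous_iff_continuousAt.2 fun z => ?_
  by_cases hz : ‖z‖ < 1 / 2
  · exact continuous_torusProj.continuousAt.comp
      (hc.continuousAt.comp (continuousAt_torusRep hz))
  · have hev : descend f =ᶠ[nhds z] id := by
      filter_upwards [continuous_norm.continuousAt.eventually_const_lt
        (hr.trans_le (not_lt.1 hz))] with w hw
      exact descend_of_le hf hw.le
    exact continuousAt_id.congr hev.symm

lemma norm_lt_of_support {f : ℝ × ℝ ≃ₜ ℝ × ℝ} {r : ℝ} (hf : ∀ v, 2 * r ≤ ‖v‖ → f v = v)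
    {v : ℝ × ℝ} (hv : ‖v‖ < 2 * r) : ‖f v‖ < 2 * r := by
  by_contra! h
  have := f.injective (hf _ h)
  rw [this] at h
  exact h.not_gt hv

lemma descend_descend {f : ℝ × ℝ ≃ₜ ℝ × ℝ} {r : ℝ} (hr : 2 * r < 1 / 2)
    (hf : ∀ v, 2 * r ≤ ‖v‖ → f v = v) (hf' : ∀ v, 2 * r ≤ ‖v‖ → f.symm v = v) (z : Torus2) :
    descend f.symm (descend f z) = z := by
  rcases lt_or_ge ‖z‖ (2 * r) with h | h
  · have h1 := norm_lt_of_support hf ((norm_torusRep z).trans_lt h)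
    rw [descend, descend, torusRep_torusProj (h1.trans hr), f.symm_apply_apply,
      torusProj_torusRep]
  · rw [descend_of_le hf h, descend_of_le hf' h]

lemma exists_descend (f : ℝ × ℝ ≃ₜ ℝ × ℝ) {r : ℝ} (hr : 0 < r) (hr2 : 2 * r < 1 / 2)
    (hf : ∀ v, 2 * r ≤ ‖v‖ → f v = v) :
    ∃ F : Torus2 ≃ₜ Torus2, (∀ v, ‖v‖ < 1 / 2 → F (torusProj v) = torusProj (f v)) ∧
      ∀ z, dist (F z) z < 4 * r := by
  have hf' : ∀ v, 2 * r ≤ ‖v‖ → f.symm v = v := fun v hv => by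
    rw [f.symm_apply_eq, hf v hv]
  refine ⟨{ toFun := descend f
            invFun := descend f.symm
            left_inv := descend_descend hr2 hf hf'
            right_inv := descend_descend (f := f.symm) hr2 hf' hf
            continuous_toFun := continuous_descend f.continuous hr2 hf
            continuous_invFun := continuous_descend f.symm.continuous hr2 hf' }, ?_, ?_⟩
  · intro v hv
    change descend f (torusProj v) = _
    rw [descend, torusRep_torusProj hv]
  · intro z
    change dist (descend f z) z < _
    rcases lt_or_ge ‖z‖ (2 * r) with h | h
    · have h0 : ‖torusRep z‖ < 2 * r := (norm_torusRep z).trans_lt h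
      have h1 := norm_lt_of_support hf h0
      have e : descend f z - z = torusProj (f (torusRep z) - torusRep z) := by
        rw [torusProj_sub, torusProj_torusRep, descend]
      rw [dist_eq_norm, e]
      calc _ ≤ ‖f (torusRep z) - torusRep z‖ := norm_torusProj_le _
        _ ≤ ‖f (torusRep z)‖ + ‖torusRep z‖ := norm_sub_le _ _
        _ < 4 * r := by linarith
    · rw [descend_of_le hf h, dist_self]; positivity

/-! ### Lifting homeomorphisms of the torus to the plane -/

lemma torusProj_eq_zero_iff {v : ℝ × ℝ} :
    torusProj v = 0 ↔ ∃ k l : ℤ, v = ((k : ℝ), (l : ℝ)) := by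
  constructor
  · intro h
    obtain ⟨k, hk⟩ := AddCircle.coe_eq_zero_iff (1 : ℝ) |>.1 (congrArg Prod.fst h)
    obtain ⟨l, hl⟩ := AddCircle.coe_eq_zero_iff (1 : ℝ) |>.1 (congrArg Prod.snd h)
    exact ⟨k, l, Prod.ext (by simpa using hk.symm) (by simpa using hl.symm)⟩
  · rintro ⟨k, l, rfl⟩
    exact Prod.ext ((AddCircle.coe_eq_zero_iff (1 : ℝ)).2 ⟨k, by simp⟩)
      ((AddCircle.coe_eq_zero_iff (1 : ℝ)).2 ⟨l, by simp⟩)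

/-- A continuous map into the lattice `ℤ²` is constant. -/
lemma const_of_torusProj {D : ℝ × ℝ → ℝ × ℝ} (hD : Continuous D)
    (h : ∀ v, torusProj (D v) = 0) (v : ℝ × ℝ) : D v = D 0 := by
  have key : ∀ d : ℝ × ℝ → ℝ, Continuous d → (∀ v, (d v : AddCircle (1 : ℝ)) = 0) →
      d v = d 0 := fun d hd hz =>
    congrFun ((AddCircle.isCoveringMap_coe (1 : ℝ)).eq_of_comp_eq hd
      (continuous_const (y := d 0)) (funext fun u => (hz u).trans (hz 0).symm) 0 rfl) v
  exact Prod.ext (key _ hD.fst fun u => congrArg Prod.fst (h u))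
    (key _ hD.snd fun u => congrArg Prod.snd (h u))

lemma exists_lift_map (g : C(Torus2, Torus2)) (hg : g 0 = 0) :
    ∃ G : C(ℝ × ℝ, ℝ × ℝ), G 0 = 0 ∧ ∀ v, torusProj (G v) = g (torusProj v) := by
  have key : ∀ u : C(ℝ × ℝ, AddCircle (1 : ℝ)), u 0 = 0 →
      ∃ U : C(ℝ × ℝ, ℝ), U 0 = 0 ∧ ∀ v, (U v : AddCircle (1 : ℝ)) = u v := fun u hu => by
    obtain ⟨U, ⟨h0, h⟩, -⟩ := (AddCircle.isCoveringMap_coe (1 : ℝ)).existsUnique_continuousMap_lifts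
      u 0 0 (by simp [hu])
    exact ⟨U, h0, congrFun h⟩
  have hc := g.continuous.comp continuous_torusProj
  obtain ⟨U, hU0, hU⟩ := key ⟨fun v => (g (torusProj v)).1, hc.fst⟩
    (by simp [torusProj_zero, hg])
  obtain ⟨V, hV0, hV⟩ := key ⟨fun v => (g (torusProj v)).2, hc.snd⟩
    (by simp [torusProj_zero, hg])
  exact ⟨U.prodMk V, Prod.ext hU0 hV0, fun v => Prod.ext (hU v) (hV v)⟩

lemma exists_lift (g : Torus2 ≃ₜ Torus2) (hg : g 0 = 0) :
    ∃ G : ℝ × ℝ ≃ₜ ℝ × ℝ, G 0 = 0 ∧ ∀ v, torusProj (G v) = g (torusProj v) := by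
  have hg' : g.symm 0 = 0 := by rw [g.symm_apply_eq, hg]
  obtain ⟨G, h0, hG⟩ := exists_lift_map ⟨g, g.continuous⟩ hg
  obtain ⟨G', h0', hG'⟩ := exists_lift_map ⟨g.symm, g.symm.continuous⟩ hg'
  simp only [ContinuousMap.coe_mk] at hG hG'
  have inv : ∀ H H' : C(ℝ × ℝ, ℝ × ℝ), H 0 = 0 → H' 0 = 0 →
      (∀ v, torusProj (H' (H v)) = torusProj v) → ∀ v, H' (H v) = v := fun H H' e e' h v => by
    have := const_of_torusProj (D := fun v => H' (H v) - v) (by fun_prop)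
      (fun v => by rw [torusProj_sub, h, sub_self]) v
    simpa [e, e', sub_eq_zero] using this
  exact ⟨{ toFun := G
           invFun := G'
           left_inv := inv G G' h0 h0' fun v => by rw [hG', hG, g.symm_apply_apply]
           right_inv := inv G' G h0' h0 fun v => by rw [hG, hG', g.apply_symm_apply]
           continuous_toFun := G.continuous
           continuous_invFun := G'.continuous }, h0, hG⟩

/-- A lift `G` with `G 0 = 0` restricts to a homomorphism of the lattice `ℤ²` and is equivariant
with respect to it. -/
lemma lift_add {G : ℝ × ℝ → ℝ × ℝ} (hc : Continuous G) (h0 : G 0 = 0) {g : Torus2 → Torus2}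
    (hG : ∀ v, torusProj (G v) = g (torusProj v)) (v : ℝ × ℝ) {n : ℝ × ℝ}
    (hn : torusProj n = 0) : G (v + n) = G v + G n := by
  have := const_of_torusProj (D := fun v => G (v + n) - G v) (by fun_prop)
    (fun v => by rw [torusProj_sub, hG, hG, torusProj_add, hn, add_zero, sub_self]) v
  simp only [zero_add, h0, sub_zero] at this
  rw [← this]; abel

lemma exists_linear_map {G : ℝ × ℝ → ℝ × ℝ} (hc : Continuous G) (h0 : G 0 = 0)
    {g : Torus2 → Torus2} (hG : ∀ v, torusProj (G v) = g (torusProj v)) :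
    ∃ A : ℝ × ℝ →ₗ[ℝ] ℝ × ℝ, ∀ n, torusProj n = 0 → A n = G n := by
  let φ : ℤ →+ ℝ × ℝ := AddMonoidHom.mk' (fun k => G ((k : ℝ), 0)) fun a b => by
    rw [← lift_add hc h0 hG _ (torusProj_eq_zero_iff.2 ⟨b, 0, by simp⟩)]
    simp
  let ψ : ℤ →+ ℝ × ℝ := AddMonoidHom.mk' (fun k => G (0, (k : ℝ))) fun a b => by
    rw [← lift_add hc h0 hG _ (torusProj_eq_zero_iff.2 ⟨0, b, by simp⟩)]
    simp
  refine ⟨(LinearMap.toSpanSingleton ℝ _ (G (1, 0))).coprod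
    (LinearMap.toSpanSingleton ℝ _ (G (0, 1))), fun n hn => ?_⟩
  obtain ⟨k, l, rfl⟩ := torusProj_eq_zero_iff.1 hn
  have e1 : G ((k : ℝ), 0) = (k : ℝ) • G (1, 0) := by
    have : φ k = k • φ 1 := by rw [← map_zsmul]; simp
    simpa [φ, Int.cast_smul_eq_zsmul] using this
  have e2 : G (0, (l : ℝ)) = (l : ℝ) • G (0, 1) := by
    have : ψ l = l • ψ 1 := by rw [← map_zsmul]; simp
    simpa [ψ, Int.cast_smul_eq_zsmul] using this
  have e3 := lift_add hc h0 hG ((k : ℝ), 0) (torusProj_eq_zero_iff.2 ⟨0, l, rfl⟩)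
  simp only [Prod.mk_add_mk, Int.cast_zero, add_zero, zero_add] at e3
  rw [e3, e1, e2]
  simp

/-- The homomorphism of `ℤ²` induced by a homeomorphism of the torus extends to an invertible
linear map. -/
lemma exists_linear {g : Torus2 ≃ₜ Torus2} {G : ℝ × ℝ ≃ₜ ℝ × ℝ} (h0 : G 0 = 0)
    (hG : ∀ v, torusProj (G v) = g (torusProj v)) :
    ∃ A : (ℝ × ℝ) ≃ₗ[ℝ] (ℝ × ℝ), ∀ n, torusProj n = 0 → A n = G n := by
  have h0' : G.symm 0 = 0 := by rw [G.symm_apply_eq, h0]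
  have hG' : ∀ v, torusProj (G.symm v) = g.symm (torusProj v) := fun v => by
    rw [g.eq_symm_apply, ← hG, G.apply_symm_apply]
  have hz : g 0 = 0 := by rw [← torusProj_zero, ← hG, h0]
  have hz' : g.symm 0 = 0 := by rw [g.symm_apply_eq, hz]
  obtain ⟨A, hA⟩ := exists_linear_map G.continuous h0 hG
  obtain ⟨A', hA'⟩ := exists_linear_map G.symm.continuous h0' hG'
  have b1 : torusProj (1, 0) = 0 := torusProj_eq_zero_iff.2 ⟨1, 0, by simp⟩
  have b2 : torusProj (0, 1) = 0 := torusProj_eq_zero_iff.2 ⟨0, 1, by simp⟩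
  have i1 : ∀ n, torusProj n = 0 → A' (A n) = n := fun n hn => by
    rw [hA n hn, hA' _ (by rw [hG, hn, hz]), G.symm_apply_apply]
  have i2 : ∀ n, torusProj n = 0 → A (A' n) = n := fun n hn => by
    rw [hA' n hn, hA _ (by rw [hG', hn, hz']), G.apply_symm_apply]
  have ext2 : ∀ L : ℝ × ℝ →ₗ[ℝ] ℝ × ℝ, L (1, 0) = (1, 0) → L (0, 1) = (0, 1) →
      L = LinearMap.id := fun L l1 l2 => by
    refine LinearMap.prod_ext ?_ ?_ <;> refine LinearMap.ext_ring ?_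
    · simpa using l1
    · simpa using l2
  exact ⟨LinearEquiv.ofLinearMap A A' (ext2 _ (i2 _ b1) (i2 _ b2)) (ext2 _ (i1 _ b1) (i1 _ b2)), hA⟩

/-- A continuous map commuting with the translations of `ℤ²` is at bounded distance from the
identity. -/
lemma exists_bounded {Q : ℝ × ℝ → ℝ × ℝ} (hc : Continuous Q)
    (hQ : ∀ v n, torusProj n = 0 → Q (v + n) = Q v + n) : ∃ C, ∀ v, ‖Q v - v‖ ≤ C := by
  obtain ⟨C, hC⟩ := (isCompact_Icc (a := (0 : ℝ × ℝ)) (b := (1, 1))).exists_bound_of_continuousOn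
    (f := fun v => Q v - v) (by fun_prop)
  refine ⟨C, fun v => ?_⟩
  let u : ℝ × ℝ := (Int.fract v.1, Int.fract v.2)
  let n : ℝ × ℝ := ((⌊v.1⌋ : ℝ), (⌊v.2⌋ : ℝ))
  have e : v = u + n := Prod.ext (Int.fract_add_floor _).symm (Int.fract_add_floor _).symm
  have hu := hC u ⟨⟨Int.fract_nonneg _, Int.fract_nonneg _⟩,
    ⟨(Int.fract_lt_one _).le, (Int.fract_lt_one _).le⟩⟩
  rw [e, hQ u n (torusProj_eq_zero_iff.2 ⟨_, _, rfl⟩)]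
  simpa using hu

/-! ### Density -/

/-- The case of a fixed point at the origin. -/
lemma dense_of_fixed (g : Torus2 ≃ₜ Torus2) (hg : g 0 = 0) {ε : ℝ} (hε : 0 < ε) :
    ∃ h : Torus2 ≃ₜ Torus2, MemGamma 0 h ∧ ∀ z : Torus2, dist (h z) (g z) < ε := by
  obtain ⟨G, h0, hG⟩ := exists_lift g hg
  obtain ⟨A, hA⟩ := exists_linear h0 hG
  let Q : ℝ × ℝ ≃ₜ ℝ × ℝ := A.toContinuousLinearEquiv.toHomeomorph.trans G.symm
  have hQ : ∀ v, Q v = G.symm (A v) := fun _ => rfl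
  have h0' : G.symm 0 = 0 := by rw [G.symm_apply_eq, h0]
  have hQ0 : Q 0 = 0 := by rw [hQ, map_zero, h0']
  have hG' : ∀ v, torusProj (G.symm v) = g.symm (torusProj v) := fun v => by
    rw [g.eq_symm_apply, ← hG, G.apply_symm_apply]
  obtain ⟨C, hC⟩ := exists_bounded Q.continuous fun v n hn => by
    rw [hQ, hQ, map_add, lift_add G.symm.continuous h0' hG' _ (by rw [hA n hn, hG, hn, hg]),
      hA n hn, G.symm_apply_apply]
  obtain ⟨δ, hδ, hgδ⟩ := Metric.uniformContinuous_iff.1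
    (CompactSpace.uniformContinuous_of_continuous g.continuous) ε hε
  obtain ⟨r, hr, hr1⟩ := exists_between (lt_min (a := (0 : ℝ)) (b := δ / 4) (c := 1 / 4)
    (by positivity) (by norm_num))
  obtain ⟨hr1, hr2⟩ := lt_min_iff.1 hr1
  obtain ⟨f, hf, hfQ⟩ := exists_squeeze Q hC hr
  obtain ⟨F, hF, hFd⟩ := exists_descend f hr (by linarith) hf
  have hsmall : ∀ᶠ v in nhds (0 : ℝ × ℝ), ‖Q v‖ < r :=
    Q.continuous.norm.continuousAt.eventually_lt_const (by simpa [hQ0] using hr)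
  obtain ⟨s, hs, hsQ⟩ := Metric.eventually_nhds_iff.1 hsmall
  -- Near `0`, `F` lifts to `Q = G⁻¹ ∘ A`, so `g ∘ F` lifts to `A`.
  have key : ∀ v : ℝ × ℝ, ‖v‖ < min s r → g (F (torusProj v)) = torusProj (A v) := fun v hv => by
    obtain ⟨hv1, hv2⟩ := lt_min_iff.1 hv
    rw [hF v (by linarith), hfQ v hv2.le (hsQ (by simpa using hv1)).le, ← hG, hQ,
      G.apply_symm_apply]
  refine ⟨F.trans g, ⟨A, min s r, lt_min hs hr, fun v hv => ?_⟩, fun z => ?_⟩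
  · have k0 := key 0 (by simpa using ⟨hs, hr⟩)
    rw [map_zero A, torusProj_zero] at k0
    simp only [Homeomorph.trans_apply, zero_add, key v hv, k0]
  · exact hgδ ((hFd z).trans (by linarith))

/-- For every `x ∈ 𝕋²`, the set `Γ_x` is dense in the homeomorphisms of `𝕋²` for the
uniform (`C⁰`) metric: every homeomorphism `g` is uniformly `ε`-approximated by some
`h ∈ Γ_x`. -/
theorem gamma_dense_in_homeomorphisms
    (x : Torus2) (g : Torus2 ≃ₜ Torus2) (ε : ℝ) (hε : 0 < ε) :
    ∃ h : Torus2 ≃ₜ Torus2, MemGamma x h ∧ ∀ z : Torus2, dist (h z) (g z) < ε := by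
  -- Translations in source and target reduce to `x = 0` and `g 0 = 0`.
  obtain ⟨h, ⟨A, δ, hδ, hA⟩, hd⟩ := dense_of_fixed
    ((Homeomorph.addLeft x).trans (g.trans (Homeomorph.addRight (-g x)))) (by simp) hε
  refine ⟨(Homeomorph.addLeft (-x)).trans (h.trans (Homeomorph.addRight (g x))),
    ⟨A, δ, hδ, fun v hv => ?_⟩, fun z => ?_⟩
  · have := hA v hv
    rw [zero_add] at this
    simp only [Homeomorph.trans_apply, Homeomorph.coe_addLeft, Homeomorph.coe_addRight,
      neg_add_cancel_left, neg_add_cancel, this]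
    abel
  · have := hd (-x + z)
    simp only [Homeomorph.trans_apply, Homeomorph.coe_addLeft, Homeomorph.coe_addRight,
      add_neg_cancel_left] at this ⊢
    rw [dist_eq_norm] at this ⊢
    convert this using 2
    abel
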